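/- Let ψ be entire, φ(z) = az + b with 0 < |a| < 1 and a not a positive real number, ψ(b/(1-a)) ≠ 0, and suppose C_{ψ,φ} is compact on F². Then 0 ∈ W(C_{ψ,φ}) and W(C_{ψ,φ}) is closed. -/

import Mathlib

open MeasureTheory Complex

/-- The Gaussian measure `π⁻¹ e^{-|z|²} dA(z)` on `ℂ`. -/
noncomputable def gaussMeasure : Measure ℂ :=
  (volume : Measure ℂ).withDensity fun z => ENNReal.ofReal (Real.exp (-(‖z‖ ^ 2)) / Real.pi)

/-- A function is entire if it is differentiable on all of `ℂ`. -/
def Entire (f : ℂ → ℂ) : Prop := Differentiable ℂ f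

/-- The squared Fock-space norm `∫ |f|² dμ`. -/
noncomputable def fockNormSq (f : ℂ → ℂ) : ℝ := ∫ z, ‖f z‖ ^ 2 ∂gaussMeasure

/-- Membership in the Fock space `F²`: entire and square integrable w.r.t. the Gaussian. -/
def MemFock (f : ℂ → ℂ) : Prop :=
  Entire f ∧ Integrable (fun z => ‖f z‖ ^ 2) gaussMeasure

/-- The Fock-space inner product `⟨f, g⟩ = ∫ f ḡ dμ`. -/
noncomputable def fockInner (f g : ℂ → ℂ) : ℂ :=
  ∫ z, f z * (starRingEnd ℂ) (g z) ∂gaussMeasure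

/-- The weighted composition operator `C_{ψ,φ} f = ψ · (f ∘ φ)`. -/
def wcomp (ψ φ f : ℂ → ℂ) : ℂ → ℂ := fun z => ψ z * f (φ z)

/-- Boundedness of `C_{ψ,φ}` on `F²`. -/
def BoundedWCO (ψ φ : ℂ → ℂ) : Prop :=
  ∃ C : ℝ, ∀ f, MemFock f →
    MemFock (wcomp ψ φ f) ∧ fockNormSq (wcomp ψ φ f) ≤ C * fockNormSq f

/-- The numerical range `W(C_{ψ,φ}) = {⟨C_{ψ,φ} f, f⟩ : ‖f‖ = 1}` on `F²`. -/
noncomputable def numRange (ψ φ : ℂ → ℂ) : Set ℂ :=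
  {w | ∃ f, MemFock f ∧ fockNormSq f = 1 ∧ w = fockInner (wcomp ψ φ f) f}

/-- The point spectrum of `C_{ψ,φ}` on `F²`. -/
def pointSpectrum (ψ φ : ℂ → ℂ) : Set ℂ :=
  {lam | ∃ f, MemFock f ∧ f ≠ 0 ∧ wcomp ψ φ f = fun z => lam * f z}

/-- Compactness of `C_{ψ,φ}` on `F²`: it is bounded and the image of every sequence in the
unit ball of `F²` has a subsequence which is Cauchy in the `F²` norm. -/
def CompactWCO (ψ φ : ℂ → ℂ) : Prop :=
  BoundedWCO ψ φ ∧ ∀ f : ℕ → ℂ → ℂ, (∀ k, MemFock (f k) ∧ fockNormSq (f k) ≤ 1) →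
    ∃ g : ℕ → ℕ, StrictMono g ∧ ∀ ε : ℝ, 0 < ε → ∃ N : ℕ, ∀ i, N ≤ i → ∀ j, N ≤ j →
      fockNormSq (fun z => wcomp ψ φ (f (g i)) z - wcomp ψ φ (f (g j)) z) < ε

section NumericalRange

open Filter Topology

open scoped InnerProductSpace

variable {H : Type*} [NormedAddCommGroup H] [InnerProductSpace ℂ H]

/-- The numerical range of a bounded operator. -/
def opNumRange (T : H →L[ℂ] H) : Set ℂ :=
  {w | ∃ x : H, ‖x‖ = 1 ∧ ⟪x, T x⟫_ℂ = w}

theorem inner_div_sq_norm_mem_opNumRange (T : H →L[ℂ] H) {x : H} (hx : x ≠ 0) :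
    ⟪x, T x⟫_ℂ / (‖x‖ ^ 2 : ℝ) ∈ opNumRange T := by
  have hn : (‖x‖ : ℂ) ≠ 0 := by simpa using hx
  refine ⟨((‖x‖ : ℂ)⁻¹) • x, ?_, ?_⟩
  · rw [norm_smul, norm_inv, Complex.norm_real, norm_norm]
    exact inv_mul_cancel₀ (by simpa using hx)
  · rw [map_smul, inner_smul_left, inner_smul_right, map_inv₀, Complex.conj_ofReal]
    push_cast
    field_simp

/-- A unit complex number `c` with `c * u + conj c * v` real. -/
theorem exists_norm_eq_one_im_eq_zero (u v : ℂ) :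
    ∃ c : ℂ, ‖c‖ = 1 ∧ (c * u + (starRingEnd ℂ) c * v).im = 0 := by
  set d := u - (starRingEnd ℂ) v with hd
  have key : ∀ c : ℂ, (c * u + (starRingEnd ℂ) c * v).im = (c * d).im := by
    intro c
    simp [hd, Complex.mul_im]
    ring
  by_cases h : d = 0
  · exact ⟨1, by simp, by rw [key, h]; simp⟩
  · have hn : (‖d‖ : ℂ) ≠ 0 := by simpa using h
    refine ⟨(starRingEnd ℂ) d / ‖d‖, ?_, ?_⟩
    · simp [h]
    · rw [key, div_mul_eq_mul_div, ← Complex.normSq_eq_conj_mul_self, ← Complex.ofReal_div]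
      exact Complex.ofReal_im _

/-- The **Toeplitz–Hausdorff theorem**. -/
theorem convex_opNumRange (T : H →L[ℂ] H) : Convex ℝ (opNumRange T) := by
  rw [convex_iff_segment_subset]
  rintro α ⟨x, hx, hxα⟩ β ⟨y, hy, hyβ⟩ γ hγ
  by_cases hαβ : α = β
  · subst hαβ
    rw [segment_same] at hγ
    exact hγ ▸ ⟨x, hx, hxα⟩
  have hsub : β - α ≠ 0 := sub_ne_zero.mpr (Ne.symm hαβ)
  rw [segment_eq_image'] at hγ
  obtain ⟨s, hs, rfl⟩ := hγ
  let S : H →L[ℂ] H := (β - α)⁻¹ • (T - α • ContinuousLinearMap.id ℂ H)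
  have hS : ∀ v, ⟪v, T v⟫_ℂ = α * (‖v‖ ^ 2 : ℝ) + (β - α) * ⟪v, S v⟫_ℂ := by
    intro v
    simp only [S, _root_.smul_apply, _root_.sub_apply,
      ContinuousLinearMap.id_apply, inner_smul_right, inner_sub_right,
      inner_self_eq_norm_sq_to_K]
    push_cast
    field_simp
    simp
  have hSx : ⟪x, S x⟫_ℂ = 0 := by
    have := hS x
    rw [hxα, hx] at this
    simpa [hsub] using this
  have hSy : ⟪y, S y⟫_ℂ = 1 := by
    have := hS y
    rw [hyβ, hy] at this
    refine mul_left_cancel₀ hsub ?_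
    push_cast at this
    linear_combination -this
  obtain ⟨c, hc, him⟩ := exists_norm_eq_one_im_eq_zero ⟪x, S y⟫_ℂ ⟪y, S x⟫_ℂ
  have hcc : (starRingEnd ℂ) c * c = 1 := by
    rw [← Complex.normSq_eq_conj_mul_self, Complex.normSq_eq_norm_sq, hc]
    simp
  set m : ℝ := (c * ⟪x, S y⟫_ℂ + (starRingEnd ℂ) c * ⟪y, S x⟫_ℂ).re with hm
  have hmc : c * ⟪x, S y⟫_ℂ + (starRingEnd ℂ) c * ⟪y, S x⟫_ℂ = m :=
    Complex.ext (by simp [hm]) (by simpa using him)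
  let v : ℝ → H := fun t => ((1 - t : ℝ) : ℂ) • x + ((t : ℂ) * c) • y
  have hv : ∀ t, ⟪v t, S (v t)⟫_ℂ = ((t ^ 2 + t * (1 - t) * m : ℝ) : ℂ) := by
    intro t
    simp only [v, map_add, map_smul, inner_add_left, inner_add_right, inner_smul_left,
      inner_smul_right, map_mul, Complex.conj_ofReal, hSx, hSy]
    push_cast
    linear_combination (t : ℂ) * (1 - t) * hmc + (t : ℂ) ^ 2 * hcc
  have hv0 : ∀ t, v t ≠ 0 := by
    intro t h0
    have h1 : ((1 - t : ℝ) : ℂ) • x = -(((t : ℂ) * c) • y) := eq_neg_of_add_eq_zero_left h0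
    have h2 : ⟪((1 - t : ℝ) : ℂ) • x, S (((1 - t : ℝ) : ℂ) • x)⟫_ℂ = 0 := by
      rw [map_smul, inner_smul_left, inner_smul_right, hSx]
      simp
    rw [h1, map_neg, inner_neg_neg, map_smul, inner_smul_left, inner_smul_right, hSy, map_mul,
      Complex.conj_ofReal] at h2
    have h3 : (t : ℂ) ^ 2 = 0 := by linear_combination h2 - (t : ℂ) ^ 2 * hcc
    have h4 : t = 0 := by simpa using h3
    subst h4
    have h5 : x = 0 := by simpa using h1
    simp [h5] at hx
  have hcont : Continuous fun t => (t ^ 2 + t * (1 - t) * m) / ‖v t‖ ^ 2 := by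
    have hvc : Continuous v := by
      simp only [v]
      fun_prop
    exact Continuous.div (by fun_prop) (by fun_prop)
      fun t => pow_ne_zero 2 (norm_ne_zero_iff.mpr (hv0 t))
  obtain ⟨t, -, ht⟩ := intermediate_value_Icc zero_le_one hcont.continuousOn
    (show s ∈ _ by simpa [v, norm_smul, hc, hy] using hs)
  have hmem := inner_div_sq_norm_mem_opNumRange T (hv0 t)
  have hn : ((‖v t‖ ^ 2 : ℝ) : ℂ) ≠ 0 := by
    exact_mod_cast pow_ne_zero 2 (norm_ne_zero_iff.mpr (hv0 t))
  convert hmem using 1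
  beta_reduce
  rw [hS, hv, Complex.real_smul, ← ht, Complex.ofReal_div]
  field_simp

/-- The numerical range of a compact operator is closed as soon as it contains `0`. -/
theorem isClosed_opNumRange [CompleteSpace H] (T : H →L[ℂ] H)
    (hT : IsCompact (closure (T '' Metric.closedBall 0 1))) (h0 : (0 : ℂ) ∈ opNumRange T) :
    IsClosed (opNumRange T) := by
  classical
  rw [isClosed_iff_ultrafilter]
  intro l u hul hu
  choose! x hx1 hx2 using fun w (hw : w ∈ opNumRange T) => hw
  let X : ℂ → H := fun w => if w ∈ opNumRange T then x w else 0
  have hX : ∀ w, ‖X w‖ ≤ 1 := by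
    intro w
    by_cases hw : w ∈ opNumRange T
    · simp [X, hw, hx1 w hw]
    · simp [X, hw]
  have hXu : Tendsto (fun w => ⟪X w, T (X w)⟫_ℂ) u (𝓝 l) := by
    refine Tendsto.congr' ?_ (show Tendsto id (u : Filter ℂ) (𝓝 l) from hul)
    filter_upwards [hu] with w hw
    simp [X, hw, hx2 w hw]
  obtain ⟨z, -, hz⟩ := hT.ultrafilter_le_nhds (u.map fun w => T (X w)) (by
    rw [le_principal_iff]
    refine Filter.mem_map.mpr (Filter.univ_mem' fun w => subset_closure ?_)
    exact ⟨X w, by simpa using hX w, rfl⟩)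
  have hz' : Tendsto (fun w => T (X w)) u (𝓝 z) := hz
  obtain ⟨ξ, hξ, hξu⟩ := (WeakDual.isCompact_closedBall (𝕜 := ℂ) (E := H) 0 1).ultrafilter_le_nhds
    (u.map fun w => StrongDual.toWeakDual (InnerProductSpace.toDual ℂ H (X w))) (by
      rw [le_principal_iff]
      refine Filter.mem_map.mpr (Filter.univ_mem' fun w => ?_)
      simpa using hX w)
  set x₀ : H := (InnerProductSpace.toDual ℂ H).symm (WeakDual.toStrongDual ξ) with hx₀
  have hx₀n : ‖x₀‖ ≤ 1 := by
    rw [hx₀, LinearIsometryEquiv.norm_map]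
    simpa using hξ
  have hweak : ∀ y, Tendsto (fun w => ⟪X w, y⟫_ℂ) u (𝓝 ⟪x₀, y⟫_ℂ) := by
    intro y
    have h1 : Tendsto (fun w => StrongDual.toWeakDual (InnerProductSpace.toDual ℂ H (X w)) y) u
      (𝓝 (ξ y)) := ((WeakDual.eval_continuous y).tendsto ξ).comp hξu
    have h2 : ⟪x₀, y⟫_ℂ = ξ y := by
      rw [hx₀, InnerProductSpace.toDual_symm_apply]
      rfl
    rw [h2]
    exact h1
  have hzx : z = T x₀ := by
    refine ext_inner_right ℂ fun y => ?_
    have h1 : Tendsto (fun w => ⟪T (X w), y⟫_ℂ) u (𝓝 ⟪z, y⟫_ℂ) := hz'.inner tendsto_const_nhds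
    have h2 : Tendsto (fun w => ⟪T (X w), y⟫_ℂ) u (𝓝 ⟪T x₀, y⟫_ℂ) := by
      simpa only [ContinuousLinearMap.adjoint_inner_right] using
        hweak (ContinuousLinearMap.adjoint T y)
    exact tendsto_nhds_unique h1 h2
  have hlim : Tendsto (fun w => ⟪X w, T (X w)⟫_ℂ) u (𝓝 ⟪x₀, T x₀⟫_ℂ) := by
    have h1 : Tendsto (fun w => ⟪X w, T (X w) - z⟫_ℂ) u (𝓝 0) := by
      have h3 : Tendsto (fun w => ‖T (X w) - z‖) u (𝓝 0) :=
        tendsto_iff_norm_sub_tendsto_zero.mp hz'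
      refine squeeze_zero_norm (fun w => (norm_inner_le_norm _ _).trans ?_) h3
      exact mul_le_of_le_one_left (norm_nonneg _) (hX w)
    have h2 := h1.add (hweak z)
    simp only [inner_sub_right, sub_add_cancel, zero_add] at h2
    rwa [hzx] at h2
  have hl : l = ⟪x₀, T x₀⟫_ℂ := tendsto_nhds_unique hXu hlim
  by_cases hx0 : x₀ = 0
  · rw [hl, hx0, inner_zero_left]
    exact h0
  · have hmem := inner_div_sq_norm_mem_opNumRange T hx0
    have hpos : 0 < ‖x₀‖ ^ 2 := by positivity
    have hsm := (convex_opNumRange T).smul_mem_of_zero_mem h0 hmem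
      (t := ‖x₀‖ ^ 2) ⟨hpos.le, pow_le_one₀ (norm_nonneg _) hx₀n⟩
    rw [Complex.real_smul, mul_div_cancel₀ _ (by exact_mod_cast hpos.ne')] at hsm
    rwa [hl]

theorem isCompact_closure_image_closedBall_of_exists_cauchySeq [CompleteSpace H] (T : H →L[ℂ] H)
    (hT : ∀ x : ℕ → H, (∀ k, ‖x k‖ ≤ 1) →
      ∃ g : ℕ → ℕ, StrictMono g ∧ CauchySeq fun k => T (x (g k))) :
    IsCompact (closure (T '' Metric.closedBall 0 1)) := by
  refine IsSeqCompact.isCompact ?_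
  intro y hy
  have hy' : ∀ k, ∃ x : H, ‖x‖ ≤ 1 ∧ dist (y k) (T x) < 1 / ((k : ℝ) + 1) := by
    intro k
    obtain ⟨_, ⟨x, hx, rfl⟩, hd⟩ := Metric.mem_closure_iff.mp (hy k) _ Nat.one_div_pos_of_nat
    exact ⟨x, by simpa using hx, hd⟩
  choose x hx hd using hy'
  obtain ⟨g, hg, hc⟩ := hT x hx
  obtain ⟨z, hz⟩ := cauchySeq_tendsto_of_complete hc
  have hyz : Tendsto (y ∘ g) atTop (𝓝 z) := by
    refine (tendsto_iff_of_dist ?_).mpr hz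
    exact squeeze_zero (fun _ => dist_nonneg) (fun k => (hd (g k)).le)
      (tendsto_one_div_add_atTop_nhds_zero_nat.comp hg.tendsto_atTop)
  exact ⟨z, isClosed_closure.mem_of_tendsto hyz (Eventually.of_forall fun k => hy _), g, hg, hyz⟩

end NumericalRange

/-- Some iterated square of a complex number off the positive real axis has nonpositive real
part. -/
theorem exists_re_pow_two_pow_nonpos {a : ℂ} (hapos : ∀ t : ℝ, 0 < t → a ≠ (t : ℂ)) :
    ∃ k : ℕ, (a ^ 2 ^ k).re ≤ 0 := by
  by_contra! hcon
  have ha : a ≠ 0 := by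
    rintro rfl
    simpa using hcon 0
  have hn : 0 < ‖a‖ := norm_pos_iff.mpr ha
  set x : ℕ → ℝ := fun k => (a ^ 2 ^ k).re / ‖a‖ ^ 2 ^ k with hx
  have hxpos : ∀ k, 0 < x k := fun k => div_pos (hcon k) (by positivity)
  have hstep : ∀ k, x (k + 1) = 2 * x k ^ 2 - 1 := by
    intro k
    have h1 : ‖a‖ ^ 2 ^ k * ‖a‖ ^ 2 ^ k = (a ^ 2 ^ k).re ^ 2 + (a ^ 2 ^ k).im ^ 2 := by
      rw [← norm_pow, Complex.norm_mul_self_eq_normSq, Complex.normSq_apply]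
      ring
    have h2 : (a ^ 2 ^ (k + 1)).re = (a ^ 2 ^ k).re ^ 2 - (a ^ 2 ^ k).im ^ 2 := by
      rw [pow_succ, pow_mul, sq, Complex.mul_re]
      ring
    have h3 : ‖a‖ ^ 2 ^ (k + 1) = ‖a‖ ^ 2 ^ k * ‖a‖ ^ 2 ^ k := by
      rw [pow_succ, pow_mul, sq]
    have h4 : ‖a‖ ^ 2 ^ k ≠ 0 := by positivity
    simp only [hx]
    rw [h3, h2]
    field_simp
    linear_combination h1
  have hx0 : x 0 < 1 := by
    simp only [hx, pow_zero, pow_one]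
    rw [div_lt_one hn]
    refine lt_of_le_of_ne (Complex.re_le_norm a) fun h => hapos ‖a‖ hn ?_
    have him : a.im = 0 := (Complex.re_eq_norm.mp h).2.symm
    exact Complex.ext (by simpa using h) (by simpa using him)
  have hgrow : ∀ k, 2 ^ k * (1 - x 0) ≤ 1 - x k := by
    intro k
    induction k with
    | zero => simp
    | succ k ih =>
      have hle : 0 ≤ 1 - x k := le_trans (by have := sub_pos.mpr hx0; positivity) ih
      have := mul_nonneg hle (hxpos k).le
      rw [hstep, pow_succ]
      nlinarith
  obtain ⟨k, hk⟩ := pow_unbounded_of_one_lt (1 / (1 - x 0)) (one_lt_two (α := ℝ))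
  rw [div_lt_iff₀ (sub_pos.mpr hx0)] at hk
  linarith [hgrow k, hxpos k]

theorem Convex.zero_mem_of_mul_pow_mem {W : Set ℂ} (hW : Convex ℝ W) {a c : ℂ}
    (hapos : ∀ t : ℝ, 0 < t → a ≠ (t : ℂ)) (h : ∀ n : ℕ, c * a ^ n ∈ W) : (0 : ℂ) ∈ W := by
  obtain ⟨k, hk⟩ := exists_re_pow_two_pow_nonpos hapos
  set b := a ^ 2 ^ k with hb
  have h0 : c ∈ W := by simpa using h 0
  have h1 : c * b ∈ W := h _
  have h2 : c * b ^ 2 ∈ W := by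
    rw [hb, ← pow_mul]
    exact h _
  set s : ℝ := ‖b‖ ^ 2 - 2 * b.re + 1 with hs
  have hspos : 0 < s := by nlinarith [sq_nonneg ‖b‖]
  have hsum : (‖b‖ ^ 2 / s) • c + (-(2 * b.re) / s) • (c * b) + (1 / s) • (c * b ^ 2) ∈ W := by
    have := hW.sum_mem (t := Finset.univ) (w := ![‖b‖ ^ 2 / s, -(2 * b.re) / s, 1 / s])
      (z := ![c, c * b, c * b ^ 2]) (by
        intro i _
        fin_cases i
        · simpa using by positivity
        · simpa using div_nonneg (by linarith) hspos.le
        · simpa using hspos.le) (by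
        simp only [Fin.sum_univ_three, Matrix.cons_val]
        rw [← add_div, ← add_div, div_eq_one_iff_eq hspos.ne', hs]
        ring) (by
        intro i _
        fin_cases i
        exacts [h0, h1, h2])
    simpa [Fin.sum_univ_three] using this
  convert hsum using 1
  have hq : b ^ 2 - 2 * b.re * b + (‖b‖ : ℂ) ^ 2 = 0 := by
    have h3 := Complex.add_conj b
    rw [← Complex.conj_mul']
    push_cast at h3
    linear_combination b * h3
  have hsc : (s : ℂ) ≠ 0 := by exact_mod_cast hspos.ne'
  simp only [Complex.real_smul]
  push_cast
  field_simp
  linear_combination -c * hq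

section Fock

open Filter Topology

open scoped InnerProductSpace

theorem integral_radial_mul_entire {k : ℂ → ℝ} (hk : Continuous k)
    (hrad : ∀ c w : ℂ, ‖c‖ = 1 → k (c * w) = k w) {h : ℂ → ℂ} (hh : Differentiable ℂ h)
    (hint : Integrable fun w => (k w : ℂ) * h w) :
    ∫ w, (k w : ℂ) * h w = h 0 * ∫ w, (k w : ℂ) := by
  set F : ℂ → ℂ := fun w => (k w : ℂ) * h w with hF
  have hrot : ∀ θ : ℝ, MeasurePreserving (fun w : ℂ => circleMap 0 1 θ * w) := by
    intro θ
    have := (rotation (Circle.exp θ)).measurePreserving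
    convert this using 2 with w
    simp [rotation_apply, circleMap]
  have hemb : ∀ θ : ℝ, MeasurableEmbedding (fun w : ℂ => circleMap 0 1 θ * w) := by
    intro θ
    have := (rotation (Circle.exp θ)).toHomeomorph.measurableEmbedding
    convert this using 2 with w
    simp [rotation_apply, circleMap]
  have hFrot : ∀ (θ : ℝ) w, F (circleMap 0 1 θ * w) = k w * h (circleMap 0 1 θ * w) := by
    intro θ w
    simp only [hF]
    rw [hrad _ _ (by simp)]
  have hcont : Continuous fun q : ℝ × ℂ => F (circleMap 0 1 q.1 * q.2) := by
    have h1 : Continuous F := (continuous_ofReal.comp hk).mul hh.continuous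
    exact h1.comp (((continuous_circleMap 0 1).comp continuous_fst).mul continuous_snd)
  have hprod : Integrable (fun q : ℝ × ℂ => F (circleMap 0 1 q.1 * q.2))
      ((volume.restrict (Set.Ioc 0 (2 * Real.pi))).prod volume) := by
    rw [integrable_prod_iff hcont.aestronglyMeasurable]
    refine ⟨Eventually.of_forall fun θ => (hrot θ).integrable_comp_of_integrable hint, ?_⟩
    have : ∀ θ : ℝ, ∫ w, ‖F (circleMap 0 1 θ * w)‖ = ∫ w, ‖F w‖ := fun θ =>
      (hrot θ).integral_comp (hemb θ) fun w => ‖F w‖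
    simp only [this]
    exact integrable_const _
  have hswap := integral_integral_swap (f := fun θ w => F (circleMap 0 1 θ * w)) hprod
  have hmean : ∀ w, ∫ θ in Set.Ioc 0 (2 * Real.pi), h (circleMap 0 1 θ * w)
      = 2 * Real.pi * h 0 := by
    intro w
    have hd : Differentiable ℂ fun ζ => h (ζ * w) := hh.comp (by fun_prop)
    have h1 := (hd.diffContOnCl (s := Metric.ball 0 |1|)).circleAverage
    rw [Real.circleAverage_def, intervalIntegral.integral_of_le Real.two_pi_pos.le, zero_mul] at h1
    rw [← h1, Complex.real_smul]
    have : (Real.pi : ℂ) ≠ 0 := by exact_mod_cast Real.pi_ne_zero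
    push_cast
    rw [mul_inv_cancel_left₀ (mul_ne_zero two_ne_zero this)]
  have hl : ∀ θ : ℝ, ∫ w, F (circleMap 0 1 θ * w) = ∫ w, F w := fun θ =>
    (hrot θ).integral_comp (hemb θ) F
  simp only [hl] at hswap
  simp only [hFrot, integral_const_mul, hmean] at hswap
  rw [setIntegral_const, integral_mul_const, Complex.real_smul] at hswap
  have hpi : (Real.pi : ℂ) ≠ 0 := by exact_mod_cast Real.pi_ne_zero
  have hvol : volume.real (Set.Ioc 0 (2 * Real.pi)) = 2 * Real.pi := by
    simp [Real.two_pi_pos.le]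
  rw [hvol] at hswap
  push_cast at hswap
  refine mul_left_cancel₀ (mul_ne_zero two_ne_zero hpi) ?_
  linear_combination hswap

theorem measurable_gaussDensity :
    Measurable fun z : ℂ => ENNReal.ofReal (Real.exp (-(‖z‖ ^ 2)) / Real.pi) := by
  fun_prop

theorem gaussDensity_nonneg (z : ℂ) : 0 ≤ Real.exp (-(‖z‖ ^ 2)) / Real.pi := by
  positivity

theorem integral_gaussMeasure {E : Type*} [NormedAddCommGroup E] [NormedSpace ℝ E] (f : ℂ → E) :
    ∫ z, f z ∂gaussMeasure = ∫ z, (Real.exp (-(‖z‖ ^ 2)) / Real.pi) • f z := by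
  rw [gaussMeasure, integral_withDensity_eq_integral_toReal_smul measurable_gaussDensity
    (Eventually.of_forall fun _ => ENNReal.ofReal_lt_top)]
  simp only [ENNReal.toReal_ofReal (gaussDensity_nonneg _)]

theorem integrable_gaussMeasure_iff {E : Type*} [NormedAddCommGroup E] [NormedSpace ℝ E]
    {f : ℂ → E} : Integrable f gaussMeasure ↔
      Integrable fun z => (Real.exp (-(‖z‖ ^ 2)) / Real.pi) • f z := by
  rw [gaussMeasure, integrable_withDensity_iff_integrable_smul' measurable_gaussDensity
    (Eventually.of_forall fun _ => ENNReal.ofReal_lt_top)]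
  simp only [ENNReal.toReal_ofReal (gaussDensity_nonneg _)]

theorem integrable_comp_add_right_iff {E : Type*} [NormedAddCommGroup E] {f : ℂ → E} (p : ℂ) :
    Integrable (fun w => f (w + p)) ↔ Integrable f :=
  (measurePreserving_add_right volume p).integrable_comp_emb (measurableEmbedding_addRight p)

/-- The radial weight `|w|²ⁿ e^{-|w|²} / π`. -/
noncomputable def fockWeight (n : ℕ) (w : ℂ) : ℝ :=
  ‖w‖ ^ (2 * n) * (Real.exp (-(‖w‖ ^ 2)) / Real.pi)

/-- The moment `∫ |w|²ⁿ e^{-|w|²} / π`. -/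
noncomputable def fockMoment (n : ℕ) : ℝ := ∫ w, fockWeight n w

theorem fockMoment_pos (n : ℕ) : 0 < fockMoment n := by
  have h := Complex.integral_rpow_mul_exp_neg_rpow (p := 2) (q := 2 * n) (by norm_num)
    (by have : (0 : ℝ) ≤ n := n.cast_nonneg
        linarith)
  have h1 : fockMoment n = (∫ x : ℂ, ‖x‖ ^ (2 * n : ℝ) * Real.exp (-‖x‖ ^ (2 : ℝ))) / Real.pi := by
    rw [fockMoment, ← integral_div]
    refine integral_congr_ae (Eventually.of_forall fun w => ?_)
    simp only [fockWeight]
    rw [Real.rpow_two, ← mul_div_assoc, ← Real.rpow_natCast ‖w‖ (2 * n)]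
    push_cast
    rfl
  rw [h1, h]
  have : 0 < Real.Gamma ((2 * n + 2) / 2) := Real.Gamma_pos_of_pos (by positivity)
  positivity

theorem integrable_fockWeight (n : ℕ) : Integrable (fockWeight n) := by
  by_contra h
  exact (fockMoment_pos n).ne' (integral_undef h)

/-- The function `(z - p)ⁿ e^{z p̄}`. -/
noncomputable def fockMonomial (n : ℕ) (p z : ℂ) : ℂ :=
  (z - p) ^ n * exp (z * (starRingEnd ℂ) p)

theorem memFock_fockMonomial (n : ℕ) (p : ℂ) : MemFock (fockMonomial n p) := by
  refine ⟨?_, ?_⟩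
  · unfold Entire fockMonomial
    fun_prop
  · rw [integrable_gaussMeasure_iff, ← integrable_comp_add_right_iff p]
    convert (integrable_fockWeight n).const_mul (Real.exp (‖p‖ ^ 2)) using 2 with w
    have he : Real.exp (-‖w + p‖ ^ 2) * Real.exp ((w + p) * (starRingEnd ℂ) p).re ^ 2
        = Real.exp (‖p‖ ^ 2) * Real.exp (-‖w‖ ^ 2) := by
      rw [← Real.exp_nat_mul, ← Real.exp_add, ← Real.exp_add]
      simp only [Complex.sq_norm, Complex.normSq_apply, Complex.mul_re, Complex.add_re,
        Complex.add_im, Complex.conj_re, Complex.conj_im]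
      congr 1
      push_cast
      ring
    simp only [fockMonomial, fockWeight, add_sub_cancel_right, norm_mul, norm_pow,
      Complex.norm_exp, smul_eq_mul]
    field_simp
    linear_combination ‖w‖ ^ (2 * n) * he

theorem fockInner_mul_fockMonomial (n : ℕ) (p : ℂ) {k : ℂ → ℂ} (hk : Differentiable ℂ k)
    (hint : Integrable (fun z => (z - p) ^ n * k z * (starRingEnd ℂ) (fockMonomial n p z))
      gaussMeasure) :
    fockInner (fun z => (z - p) ^ n * k z) (fockMonomial n p) = k p * fockMoment n := by
  have key : ∀ w : ℂ, (Real.exp (-(‖w + p‖ ^ 2)) / Real.pi) •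
      ((w + p - p) ^ n * k (w + p) * (starRingEnd ℂ) (fockMonomial n p (w + p)))
      = (fockWeight n w : ℂ) * (k (w + p) * exp (-(w * (starRingEnd ℂ) p))) := by
    intro w
    have he : exp (-((w + p) * (starRingEnd ℂ) (w + p))) *
        exp ((starRingEnd ℂ) (w + p) * p)
        = exp (-(w * (starRingEnd ℂ) w)) * exp (-(w * (starRingEnd ℂ) p)) := by
      rw [← Complex.exp_add, ← Complex.exp_add]
      congr 1
      simp only [map_add]
      ring
    simp only [fockMonomial, fockWeight, add_sub_cancel_right, map_mul, map_pow,
      ← Complex.exp_conj, Complex.conj_conj, Complex.real_smul]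
    push_cast
    rw [← Complex.mul_conj', ← Complex.mul_conj', pow_mul, ← Complex.mul_conj', mul_pow]
    linear_combination (k (w + p) * w ^ n * (starRingEnd ℂ) w ^ n / Real.pi) * he
  rw [integrable_gaussMeasure_iff, ← integrable_comp_add_right_iff p] at hint
  simp only [key] at hint
  rw [fockInner, integral_gaussMeasure, ← integral_add_right_eq_self _ p]
  simp only [key]
  rw [integral_radial_mul_entire (k := fockWeight n) _ _ _ hint]
  · rw [fockMoment, integral_complex_ofReal]
    simp
  · unfold fockWeight
    fun_prop
  · intro c w hc
    simp [fockWeight, hc]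
  · exact (hk.comp (by fun_prop)).mul (by fun_prop)

theorem MemFock.memLp {f : ℂ → ℂ} (hf : MemFock f) : MemLp f 2 gaussMeasure :=
  (memLp_two_iff_integrable_sq_norm hf.1.continuous.aestronglyMeasurable).mpr hf.2

theorem MemFock.integrable_mul_conj {f g : ℂ → ℂ} (hf : MemFock f) (hg : MemFock g) :
    Integrable (fun z => f z * (starRingEnd ℂ) (g z)) gaussMeasure :=
  hf.memLp.integrable_mul hg.memLp.star

theorem memFock_iff {f : ℂ → ℂ} : MemFock f ↔ Entire f ∧ MemLp f 2 gaussMeasure :=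
  ⟨fun hf => ⟨hf.1, hf.memLp⟩, fun hf => ⟨hf.1,
    (memLp_two_iff_integrable_sq_norm hf.1.continuous.aestronglyMeasurable).mp hf.2⟩⟩

theorem fockInner_fockMonomial_zero {f : ℂ → ℂ} (hf : MemFock f) (p : ℂ) :
    fockInner f (fockMonomial 0 p) = f p * fockMoment 0 := by
  simpa using fockInner_mul_fockMonomial 0 p hf.1
    (by simpa using hf.integrable_mul_conj (memFock_fockMonomial 0 p))

theorem fockInner_fockMonomial_self (n : ℕ) (p : ℂ) :
    fockInner (fockMonomial n p) (fockMonomial n p)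
      = exp (p * (starRingEnd ℂ) p) * fockMoment n :=
  fockInner_mul_fockMonomial n p (k := fun z => exp (z * (starRingEnd ℂ) p)) (by fun_prop)
    ((memFock_fockMonomial n p).integrable_mul_conj (memFock_fockMonomial n p))

theorem fockInner_self (f : ℂ → ℂ) : fockInner f f = fockNormSq f := by
  rw [fockInner, fockNormSq, ← integral_complex_ofReal]
  simp [Complex.mul_conj']

/-- The vector space of functions in the Fock space. -/
def fockFunctions : Submodule ℂ (ℂ → ℂ) where
  carrier := {f | MemFock f}
  zero_mem' := memFock_iff.mpr ⟨differentiable_const 0, MemLp.zero⟩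
  add_mem' hf hg := memFock_iff.mpr ⟨Differentiable.add hf.1 hg.1, hf.memLp.add hg.memLp⟩
  smul_mem' c _ hf := memFock_iff.mpr ⟨Differentiable.const_smul hf.1 c, hf.memLp.const_smul c⟩

/-- The map sending a function in the Fock space to its class in `L²`. -/
noncomputable def fockToLp : fockFunctions →ₗ[ℂ] Lp ℂ 2 gaussMeasure where
  toFun f := (MemFock.memLp f.2).toLp f
  map_add' _ _ := rfl
  map_smul' _ _ := rfl

theorem coeFn_fockToLp (f : fockFunctions) : fockToLp f =ᵐ[gaussMeasure] (f : ℂ → ℂ) :=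
  (MemFock.memLp f.2).coeFn_toLp

theorem inner_fockToLp (f g : fockFunctions) :
    ⟪fockToLp f, fockToLp g⟫_ℂ = fockInner g f := by
  rw [L2.inner_def, fockInner]
  refine integral_congr_ae ?_
  filter_upwards [coeFn_fockToLp f, coeFn_fockToLp g] with z hf hg
  rw [hf, hg, RCLike.inner_apply]

theorem sq_norm_fockToLp (f : fockFunctions) : ‖fockToLp f‖ ^ 2 = fockNormSq f := by
  have h := inner_fockToLp f f
  rw [fockInner_self, inner_self_eq_norm_sq_to_K, ← RCLike.ofReal_pow] at h
  exact Complex.ofReal_injective h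

/-- The (unnormalized) monomials centred at `p` as elements of the Fock space. -/
noncomputable def fockVector (n : ℕ) (p : ℂ) : fockFunctions :=
  ⟨fockMonomial n p, memFock_fockMonomial n p⟩

theorem sq_norm_fockToLp_fockVector (n : ℕ) (p : ℂ) :
    ‖fockToLp (fockVector n p)‖ ^ 2 = Real.exp (‖p‖ ^ 2) * fockMoment n := by
  have h := fockInner_fockMonomial_self n p
  rw [fockInner_self, Complex.mul_conj'] at h
  rw [sq_norm_fockToLp]
  exact_mod_cast h

theorem inner_fockVector_zero (f : fockFunctions) (p : ℂ) :
    ⟪fockToLp (fockVector 0 p), fockToLp f⟫_ℂ = (f : ℂ → ℂ) p * fockMoment 0 := by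
  rw [inner_fockToLp]
  exact fockInner_fockMonomial_zero f.2 p

theorem fockToLp_injective : Function.Injective fockToLp := by
  rw [injective_iff_map_eq_zero]
  intro f hf
  ext p
  have h := inner_fockVector_zero f p
  rw [hf, inner_zero_right] at h
  simpa [(fockMoment_pos 0).ne'] using h.symm

theorem isClosed_range_fockToLp :
    IsClosed (LinearMap.range fockToLp : Set (Lp ℂ 2 gaussMeasure)) := by
  refine IsSeqClosed.isClosed fun u g hu hug => ?_
  choose f hf using hu
  have hc := fockMoment_pos 0
  have hcc : (fockMoment 0 : ℂ) ≠ 0 := by exact_mod_cast hc.ne'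
  set G : ℂ → ℂ := fun z => ⟪fockToLp (fockVector 0 z), g⟫_ℂ / fockMoment 0 with hG
  have hdiff : ∀ n z, (f n : ℂ → ℂ) z - G z
      = ⟪fockToLp (fockVector 0 z), u n - g⟫_ℂ / fockMoment 0 := by
    intro n z
    rw [inner_sub_right, ← hf, inner_fockVector_zero, sub_div, mul_div_cancel_right₀ _ hcc]
  have hloc : TendstoLocallyUniformlyOn (fun n => (f n : ℂ → ℂ)) G atTop Set.univ := by
    rw [tendstoLocallyUniformlyOn_iff_forall_isCompact isOpen_univ]
    intro K _ hK
    obtain ⟨R, hR⟩ := hK.isBounded.exists_norm_le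
    set M : ℝ := Real.sqrt (Real.exp (R ^ 2) * fockMoment 0) with hM
    have hb : ∀ n, ∀ z ∈ K, ‖(f n : ℂ → ℂ) z - G z‖ ≤ M / fockMoment 0 * ‖u n - g‖ := by
      intro n z hz
      rw [hdiff, norm_div, Complex.norm_real, Real.norm_of_nonneg hc.le, div_mul_eq_mul_div]
      gcongr
      refine (norm_inner_le_norm _ _).trans ?_
      gcongr
      refine Real.le_sqrt_of_sq_le ?_
      rw [sq_norm_fockToLp_fockVector]
      gcongr
      exact hR z hz
    have h0 : Tendsto (fun n => M / fockMoment 0 * ‖u n - g‖) atTop (𝓝 0) := by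
      simpa using (tendsto_iff_norm_sub_tendsto_zero.mp hug).const_mul (M / fockMoment 0)
    rw [Metric.tendstoUniformlyOn_iff]
    intro ε hε
    filter_upwards [h0.eventually_lt_const hε] with n hn z hz
    rw [dist_comm, dist_eq_norm]
    exact (hb n z hz).trans_lt hn
  have hGd : Differentiable ℂ G := by
    rw [← differentiableOn_univ]
    exact hloc.differentiableOn
      (Eventually.of_forall fun n => Differentiable.differentiableOn (f n).2.1) isOpen_univ
  have hae : (g : ℂ → ℂ) =ᵐ[gaussMeasure] G := by
    obtain ⟨ns, hns, hlim⟩ := (tendstoInMeasure_of_tendsto_Lp hug).exists_seq_tendsto_ae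
    have hall : ∀ᵐ z ∂gaussMeasure, ∀ n, u n z = (f n : ℂ → ℂ) z := by
      rw [ae_all_iff]
      intro n
      rw [← hf]
      exact coeFn_fockToLp (f n)
    filter_upwards [hlim, hall] with z hz hu
    simp only [hu] at hz
    exact tendsto_nhds_unique hz
      ((hloc.tendsto_at (Set.mem_univ z)).comp hns.tendsto_atTop)
  have hGm : MemFock G := memFock_iff.mpr ⟨hGd, (memLp_congr_ae hae).mp (Lp.memLp g)⟩
  refine ⟨⟨G, hGm⟩, Lp.ext ((coeFn_fockToLp _).trans hae.symm)⟩

instance : CompleteSpace (LinearMap.range fockToLp) :=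
  isClosed_range_fockToLp.completeSpace_coe

/-- The identification of the Fock space with a closed subspace of `L²`. -/
noncomputable def fockEquiv : fockFunctions ≃ₗ[ℂ] LinearMap.range fockToLp :=
  LinearEquiv.ofInjective fockToLp fockToLp_injective

theorem inner_fockEquiv (f g : fockFunctions) : ⟪fockEquiv f, fockEquiv g⟫_ℂ = fockInner g f :=
  inner_fockToLp f g

theorem sq_norm_fockEquiv (f : fockFunctions) : ‖fockEquiv f‖ ^ 2 = fockNormSq f :=
  sq_norm_fockToLp f

theorem fockNormSq_nonneg (f : ℂ → ℂ) : 0 ≤ fockNormSq f :=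
  integral_nonneg fun _ => by positivity

/-- A weighted composition operator as a linear map on the functions in the Fock space. -/
def wcompLinear {ψ φ : ℂ → ℂ} (h : BoundedWCO ψ φ) : fockFunctions →ₗ[ℂ] fockFunctions where
  toFun f := ⟨wcomp ψ φ f, (h.choose_spec f f.2).1⟩
  map_add' f g := by
    ext z
    simp [wcomp, mul_add]
  map_smul' c f := by
    ext z
    simp [wcomp, mul_left_comm]

/-- A weighted composition operator as a bounded operator on the Fock space. -/
noncomputable def wcompCLM {ψ φ : ℂ → ℂ} (h : BoundedWCO ψ φ) :
    LinearMap.range fockToLp →L[ℂ] LinearMap.range fockToLp :=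
  (fockEquiv.toLinearMap ∘ₗ wcompLinear h ∘ₗ fockEquiv.symm.toLinearMap).mkContinuous
    (Real.sqrt |h.choose|) (by
      intro x
      obtain ⟨f, rfl⟩ := fockEquiv.surjective x
      refine abs_le_of_sq_le_sq' ?_ (by positivity) |>.2
      simp only [LinearMap.comp_apply, LinearEquiv.coe_coe, LinearEquiv.symm_apply_apply]
      rw [mul_pow, Real.sq_sqrt (abs_nonneg _), sq_norm_fockEquiv, sq_norm_fockEquiv]
      exact (h.choose_spec f f.2).2.trans
        (mul_le_mul_of_nonneg_right (le_abs_self _) (fockNormSq_nonneg _)))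

theorem wcompCLM_fockEquiv {ψ φ : ℂ → ℂ} (h : BoundedWCO ψ φ) (f : fockFunctions) :
    wcompCLM h (fockEquiv f) = fockEquiv (wcompLinear h f) := by
  simp [wcompCLM]

theorem numRange_eq_opNumRange {ψ φ : ℂ → ℂ} (h : BoundedWCO ψ φ) :
    numRange ψ φ = opNumRange (wcompCLM h) := by
  have hnorm : ∀ f : fockFunctions, ‖fockEquiv f‖ = 1 ↔ fockNormSq f = 1 := by
    intro f
    rw [← sq_norm_fockEquiv, pow_eq_one_iff_of_nonneg (norm_nonneg _) two_ne_zero]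
  ext w
  constructor
  · rintro ⟨f, hf, hf1, rfl⟩
    refine ⟨fockEquiv ⟨f, hf⟩, (hnorm _).mpr hf1, ?_⟩
    rw [wcompCLM_fockEquiv, inner_fockEquiv]
    rfl
  · rintro ⟨x, hx, rfl⟩
    obtain ⟨f, rfl⟩ := fockEquiv.surjective x
    refine ⟨f, f.2, (hnorm f).mp hx, ?_⟩
    rw [wcompCLM_fockEquiv, inner_fockEquiv]
    rfl

theorem CompactWCO.isCompact_closure_image {ψ φ : ℂ → ℂ} (h : CompactWCO ψ φ) :
    IsCompact (closure (wcompCLM h.1 '' Metric.closedBall 0 1)) := by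
  refine isCompact_closure_image_closedBall_of_exists_cauchySeq _ fun x hx => ?_
  choose f hf using fun k => fockEquiv.surjective (x k)
  obtain ⟨g, hg, hc⟩ := h.2 (fun k => f k) fun k => ⟨(f k).2, by
    rw [← sq_norm_fockEquiv, hf]
    exact pow_le_one₀ (norm_nonneg _) (hx k)⟩
  refine ⟨g, hg, Metric.cauchySeq_iff.mpr fun ε hε => ?_⟩
  obtain ⟨N, hN⟩ := hc (ε ^ 2) (by positivity)
  refine ⟨N, fun i hi j hj => ?_⟩
  rw [dist_eq_norm, ← hf, ← hf, wcompCLM_fockEquiv, wcompCLM_fockEquiv, ← map_sub]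
  refine lt_of_pow_lt_pow_left₀ 2 hε.le ?_
  rw [sq_norm_fockEquiv]
  exact hN i hi j hj

theorem mul_pow_mem_numRange {a b : ℂ} (ha : a ≠ 1) {ψ : ℂ → ℂ} (hψ : Entire ψ)
    (h : BoundedWCO ψ fun z => a * z + b) (n : ℕ) :
    ψ (b / (1 - a)) * a ^ n ∈ numRange ψ fun z => a * z + b := by
  have ha' : 1 - a ≠ 0 := sub_ne_zero.mpr (Ne.symm ha)
  set p := b / (1 - a) with hp
  have hb : b = p - a * p := by
    rw [hp]
    field_simp
  set k : ℂ → ℂ := fun z => ψ z * a ^ n * exp ((a * z + b) * (starRingEnd ℂ) p) with hk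
  have hkd : Differentiable ℂ k := (Differentiable.mul_const hψ _).mul (by fun_prop)
  have hTk : wcomp ψ (fun z => a * z + b) (fockMonomial n p) = fun z => (z - p) ^ n * k z := by
    ext z
    have : a * z + b - p = a * (z - p) := by
      rw [hb]
      ring
    simp only [wcomp, fockMonomial, hk, this, mul_pow]
    ring
  have hint := ((h.choose_spec _ (memFock_fockMonomial n p)).1).integrable_mul_conj
    (memFock_fockMonomial n p)
  rw [hTk] at hint
  have hinner := fockInner_mul_fockMonomial n p hkd hint
  rw [← hTk] at hinner
  have hsq := sq_norm_fockToLp_fockVector n p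
  have hpos : 0 < Real.exp (‖p‖ ^ 2) * fockMoment n := mul_pos (Real.exp_pos _) (fockMoment_pos n)
  have hne : fockEquiv (fockVector n p) ≠ 0 := by
    intro h0
    have h1 := sq_norm_fockEquiv (fockVector n p)
    rw [h0, norm_zero, ← sq_norm_fockToLp, hsq] at h1
    exact hpos.ne (by simpa using h1)
  rw [numRange_eq_opNumRange h]
  convert inner_div_sq_norm_mem_opNumRange (wcompCLM h) hne using 1
  rw [wcompCLM_fockEquiv, inner_fockEquiv, sq_norm_fockEquiv, ← sq_norm_fockToLp, hsq]
  change _ = fockInner (wcomp ψ (fun z => a * z + b) (fockMonomial n p)) (fockMonomial n p) / _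
  rw [hinner, eq_div_iff (by exact_mod_cast hpos.ne')]
  have hap : a * p + b = p := by
    rw [hb]
    ring
  simp only [hk, hap, Complex.mul_conj']
  push_cast
  ring

end Fock

/-- Theorem 2.2: if `C_{ψ,φ}` is compact on `F²`, `φ(z)=az+b` with `0<|a|<1`, `a` not a
positive real number, and `ψ(b/(1-a)) ≠ 0`, then `0 ∈ W(C_{ψ,φ})` and `W(C_{ψ,φ})` is
closed. -/
theorem zero_mem_numRange_compact
    (a b : ℂ) (ha0 : 0 < ‖a‖) (ha1 : ‖a‖ < 1)
    (hapos : ∀ t : ℝ, 0 < t → a ≠ (t : ℂ))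
    (ψ : ℂ → ℂ) (hψ : Entire ψ) (hψp : ψ (b / (1 - a)) ≠ 0)
    (φ : ℂ → ℂ) (hφ : φ = fun z => a * z + b)
    (hcpt : CompactWCO ψ φ) :
    (0 : ℂ) ∈ numRange ψ φ ∧ IsClosed (numRange ψ φ) := by
  subst hφ
  have ha : a ≠ 1 := by
    rintro rfl
    simp at ha1
  have hmem := mul_pow_mem_numRange ha hψ hcpt.1
  rw [numRange_eq_opNumRange hcpt.1] at hmem ⊢
  have h0 := (convex_opNumRange (wcompCLM hcpt.1)).zero_mem_of_mul_pow_mem hapos hmem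
  exact ⟨h0, isClosed_opNumRange _ hcpt.isCompact_closure_image h0⟩
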